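/- There exists a universal constant C > 0 such that the following holds. Let Λ be a finite nonempty set, k ≥ 1, γ ∈ (0, 1/2], and α₁,…,α_k real numbers. Suppose for every y ∈ {0,1}^k there is a probability distribution μ_y : Λ → [0,1] (with Σ_λ μ_y(λ) = 1), and there are functions f₁,…,f_k : Λ → [0,1] such that for all y ∈ {0,1}^k and i ∈ {1,…,k}: if y_i = 1 then Σ_{λ∈Λ} μ_y(λ)·f_i(λ) ≥ α_i + γ, and if y_i = 0 then Σ_{λ∈Λ} μ_y(λ)·f_i(λ) ≤ α_i − γ. Then k ≤ C·log₂|Λ| / γ². -/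

import Mathlib

/-- **Fat-shattering lemma for preparations of efficient ontological models** (analogue of
Aaronson's Theorem 2.6).  There is a universal constant `C > 0` such that: whenever `Λ` is
a finite nonempty ontic state space, `k ≥ 1`, `γ ∈ (0, 1/2]`, `α₁,…,α_k` are reals, and for
every `y ∈ {0,1}^k` there is a probability distribution `μ_y` on `Λ` together with
outcome-probability functions `f₁,…,f_k : Λ → [0,1]` such that for all `y` and `i`:
if `y_i = 1` then `Σ_λ μ_y(λ)·f_i(λ) ≥ α_i + γ`, and if `y_i = 0` then
`Σ_λ μ_y(λ)·f_i(λ) ≤ α_i − γ`, then `k ≤ C·log₂|Λ|/γ²`. -/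
theorem fat_shattering_lemma_EOM :
    ∃ C : ℝ, 0 < C ∧
      ∀ (Λ : Type) (_ : Fintype Λ), Nonempty Λ →
      ∀ (k : ℕ), 1 ≤ k →
      ∀ γ : ℝ, γ ∈ Set.Ioc (0 : ℝ) (1 / 2) →
      ∀ α : Fin k → ℝ,
      ∀ μ : (Fin k → Bool) → Λ → ℝ,
        (∀ (y : Fin k → Bool) (l : Λ), 0 ≤ μ y l) →
        (∀ y : Fin k → Bool, ∑ l : Λ, μ y l = 1) →
      ∀ f : Fin k → Λ → ℝ,
        (∀ (i : Fin k) (l : Λ), f i l ∈ Set.Icc (0 : ℝ) 1) →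
        (∀ (y : Fin k → Bool) (i : Fin k), y i = true → α i + γ ≤ ∑ l : Λ, μ y l * f i l) →
        (∀ (y : Fin k → Bool) (i : Fin k), y i = false → ∑ l : Λ, μ y l * f i l ≤ α i - γ) →
        (k : ℝ) ≤ C * Real.logb 2 (Fintype.card Λ) / γ ^ 2 := by
  refine ⟨2 * Real.log 2, by have := Real.log_pos (one_lt_two); linarith, ?_⟩
  intro Λ _ hne k hk γ hγ α μ hμ0 hμ1 f hf h1 h2
  obtain ⟨hγ0, -⟩ := hγ
  -- expectations lie in [0,1]
  have hE0 : ∀ y i, 0 ≤ ∑ l : Λ, μ y l * f i l := fun y i =>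
    Finset.sum_nonneg fun l _ => mul_nonneg (hμ0 y l) (hf i l).1
  have hE1 : ∀ y i, ∑ l : Λ, μ y l * f i l ≤ 1 := fun y i => by
    rw [← hμ1 y]
    exact Finset.sum_le_sum fun l _ => mul_le_of_le_one_right (hμ0 y l) (hf i l).2
  have hα0 : ∀ i, 0 ≤ α i := fun i => by
    have a := h2 (fun _ => false) i rfl
    have b := hE0 (fun _ => false) i
    linarith
  have hα1 : ∀ i, α i ≤ 1 := fun i => by
    have a := h1 (fun _ => true) i rfl
    have b := hE1 (fun _ => true) i
    linarith
  let s : Bool → ℝ := fun b => if b then 1 else -1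
  -- some ontic state achieves the average margin
  have hex : ∀ y : Fin k → Bool, ∃ l : Λ, (k : ℝ) * γ ≤ ∑ i, s (y i) * (f i l - α i) := by
    intro y
    by_contra! hcon
    have hle : (k : ℝ) * γ ≤ ∑ l : Λ, μ y l * ∑ i, s (y i) * (f i l - α i) := by
      have e : ∑ l : Λ, μ y l * ∑ i, s (y i) * (f i l - α i)
          = ∑ i, s (y i) * (∑ l : Λ, μ y l * f i l - α i) := by
        simp_rw [Finset.mul_sum]
        rw [Finset.sum_comm]
        refine Finset.sum_congr rfl fun i _ => ?_
        have : α i = ∑ l : Λ, μ y l * α i := by rw [← Finset.sum_mul, hμ1, one_mul]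
        conv_rhs => rw [this]
        rw [← Finset.sum_sub_distrib, Finset.mul_sum]
        refine Finset.sum_congr rfl fun l _ => ?_
        ring
      rw [e]
      have : (k : ℝ) * γ = ∑ _i : Fin k, γ := by simp
      rw [this]
      refine Finset.sum_le_sum fun i _ => ?_
      cases hy : y i
      · have := h2 y i hy
        simp only [s, Bool.false_eq_true, if_false]
        linarith
      · have := h1 y i hy
        simp only [s, if_true]
        linarith
    have hpos : ∃ l, 0 < μ y l := by
      by_contra! hc
      have := Finset.sum_nonpos (s := Finset.univ) fun l _ => hc l
      rw [hμ1 y] at this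
      linarith
    obtain ⟨l0, hl0⟩ := hpos
    have hlt : ∑ l : Λ, μ y l * ∑ i, s (y i) * (f i l - α i) < ∑ l : Λ, μ y l * (k * γ) :=
      Finset.sum_lt_sum (fun l _ => mul_le_mul_of_nonneg_left (hcon l).le (hμ0 y l))
        ⟨l0, Finset.mem_univ _, mul_lt_mul_of_pos_left (hcon l0) hl0⟩
    rw [← Finset.sum_mul, hμ1, one_mul] at hlt
    linarith
  have hy : ∀ y : Fin k → Bool, Real.exp (k * γ ^ 2) ≤
      ∑ l : Λ, ∏ i, Real.exp (γ * (s (y i) * (f i l - α i))) := by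
    intro y
    obtain ⟨l, hl⟩ := hex y
    calc Real.exp (k * γ ^ 2) ≤ ∏ i, Real.exp (γ * (s (y i) * (f i l - α i))) := by
          rw [← Real.exp_sum, ← Finset.mul_sum]
          apply Real.exp_le_exp.2
          nlinarith
      _ ≤ _ := Finset.single_le_sum
          (f := fun l => ∏ i, Real.exp (γ * (s (y i) * (f i l - α i))))
          (fun l _ => Finset.prod_nonneg fun i _ => (Real.exp_pos _).le) (Finset.mem_univ l)
  have hsum := Finset.sum_le_sum (s := Finset.univ) fun y _ => hy y
  rw [Finset.sum_comm] at hsum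
  have hb : ∀ l : Λ, ∑ y : Fin k → Bool, ∏ i, Real.exp (γ * (s (y i) * (f i l - α i)))
      ≤ 2 ^ k * Real.exp (k * (γ ^ 2 / 2)) := by
    intro l
    have e := Finset.prod_univ_sum (fun _ : Fin k => (Finset.univ : Finset Bool))
      (fun i b => Real.exp (γ * (s b * (f i l - α i))))
    rw [Fintype.piFinset_univ] at e
    rw [← e]
    have : (2 : ℝ) ^ k * Real.exp (k * (γ ^ 2 / 2))
        = ∏ _i : Fin k, (2 * Real.exp (γ ^ 2 / 2)) := by
      simp [mul_pow, Real.exp_nat_mul]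
    rw [this]
    refine Finset.prod_le_prod (fun i _ => Finset.sum_nonneg fun b _ => (Real.exp_pos _).le)
      fun i _ => ?_
    have hc := Real.cosh_le_exp_half_sq (γ * (f i l - α i))
    have hsq : (γ * (f i l - α i)) ^ 2 ≤ γ ^ 2 := by
      have := (hf i l).1
      have := (hf i l).2
      have := hα0 i
      have := hα1 i
      have h3 : (f i l - α i) ^ 2 ≤ 1 := by
        rw [sq_le_one_iff_abs_le_one, abs_le]
        constructor <;> linarith
      rw [mul_pow]
      exact mul_le_of_le_one_right (sq_nonneg _) h3
    have hc2 : Real.exp ((γ * (f i l - α i)) ^ 2 / 2) ≤ Real.exp (γ ^ 2 / 2) :=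
      Real.exp_le_exp.2 (by linarith)
    rw [Real.cosh_eq] at hc
    simp only [Fintype.sum_bool, s, if_true, Bool.false_eq_true, if_false, one_mul, neg_mul,
      mul_neg]
    linarith
  have hfin := hsum.trans (Finset.sum_le_sum fun l _ => hb l)
  simp only [Finset.sum_const, Finset.card_univ, Fintype.card_fun, Fintype.card_bool,
    Fintype.card_fin, nsmul_eq_mul, Nat.cast_pow, Nat.cast_ofNat] at hfin
  have hN : (0 : ℝ) < Fintype.card Λ := by exact_mod_cast Fintype.card_pos
  have hsplit : Real.exp (k * γ ^ 2) = Real.exp (k * (γ ^ 2 / 2)) * Real.exp (k * (γ ^ 2 / 2)) := by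
    rw [← Real.exp_add]
    congr 1
    ring
  have hpow : (0 : ℝ) < 2 ^ k * Real.exp (k * (γ ^ 2 / 2)) := by positivity
  have hkey : Real.exp (k * (γ ^ 2 / 2)) ≤ Fintype.card Λ := by
    rw [hsplit] at hfin
    refine le_of_mul_le_mul_right ?_ hpow
    linarith
  have hlog := (Real.le_log_iff_exp_le hN).2 hkey
  have hl2 : Real.log 2 ≠ 0 := (Real.log_pos one_lt_two).ne'
  rw [le_div_iff₀ (by positivity), Real.logb, mul_assoc, mul_div_cancel₀ _ hl2]
  linarith
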